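/- Let f : X → Y and g : Z → Y be continuous maps of topological spaces, let T = Z ×_Y X = {(z, x) ∈ Z × X : g(z) = f(x)} with the subspace topology of the product, and let f′ : T → Z be the first projection (the base change of f along g). If g is a surjective local homeomorphism and f′ is a local homeomorphism, then f is a local homeomorphism. -/

import Mathlib

open Classical in
/-- The second projection of the fiber product is a local homeomorphism when `g` is. -/
theorem isLocalHomeomorph_snd_aux {X Y Z : Type*}
    [TopologicalSpace X] [TopologicalSpace Y] [TopologicalSpace Z]
    (f : X → Y) (g : Z → Y) (hf : Continuous f) (hg : IsLocalHomeomorph g) :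
    IsLocalHomeomorph (fun p : {p : Z × X // g p.1 = f p.2} => (p : Z × X).2) := by
  intro p0
  obtain ⟨e, he, rfl⟩ := hg p0.1.1
  let s : X → {p : Z × X // e p.1 = f p.2} := fun x =>
    if h : f x ∈ e.target then ⟨(e.symm (f x), x), e.right_inv h⟩ else p0
  have hs : ∀ x, f x ∈ e.target → (s x).1 = (e.symm (f x), x) := by
    intro x hx
    simp [s, hx]
  refine ⟨{ toFun := fun p => p.1.2
            invFun := s
            source := {p | p.1.1 ∈ e.source}
            target := {x | f x ∈ e.target}
            map_source' := ?_
            map_target' := ?_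
            left_inv' := ?_
            right_inv' := ?_
            open_source := ?_
            open_target := ?_
            continuousOn_toFun := ?_
            continuousOn_invFun := ?_ }, he, rfl⟩
  · intro p hp
    change f p.1.2 ∈ e.target
    rw [← p.2]
    exact e.map_source hp
  · intro x hx
    change (s x).1.1 ∈ e.source
    rw [hs x hx]
    exact e.map_target hx
  · intro p hp
    have hx : f p.1.2 ∈ e.target := by
      rw [← p.2]
      exact e.map_source hp
    apply Subtype.ext
    rw [hs _ hx, ← p.2, e.left_inv hp]
  · intro x hx
    change (s x).1.2 = x
    rw [hs x hx]
  · exact (continuous_snd.comp continuous_subtype_val).continuousOn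
  · have hi : Topology.IsInducing (Subtype.val : {p : Z × X // e p.1 = f p.2} → Z × X) := ⟨rfl⟩
    rw [hi.continuousOn_iff]
    have h : ContinuousOn (fun x => (e.symm (f x), x)) {x | f x ∈ e.target} :=
      (e.continuousOn_symm.comp hf.continuousOn (fun x hx => hx)).prodMk continuousOn_id
    exact h.congr (fun x hx => hs x hx)
  · exact e.open_source.preimage (continuous_fst.comp continuous_subtype_val)
  · exact e.open_target.preimage hf


/-- Local homeomorphisms are local on the base: if the base change `f'` of a
continuous map `f : X → Y` along a surjective local homeomorphism `g : Z → Y`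
is a local homeomorphism, then so is `f`. -/
theorem isLocalHomeomorph_of_base_change {X Y Z : Type*}
    [TopologicalSpace X] [TopologicalSpace Y] [TopologicalSpace Z]
    (f : X → Y) (g : Z → Y) (hf : Continuous f) (hg : IsLocalHomeomorph g)
    (hgs : Function.Surjective g)
    (hf' : IsLocalHomeomorph
      (fun p : {p : Z × X // g p.1 = f p.2} => (p : Z × X).1)) :
    IsLocalHomeomorph f := by
  have h2 := isLocalHomeomorph_snd_aux f g hf hg
  have hc := hg.comp hf'
  have heq : g ∘ (fun p : {p : Z × X // g p.1 = f p.2} => (p : Z × X).1) =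
      f ∘ (fun p : {p : Z × X // g p.1 = f p.2} => (p : Z × X).2) :=
    funext fun p => p.2
  rw [heq] at hc
  have h3 := (hc.isLocalHomeomorphOn (s := Set.univ)).of_comp_right h2.isLocalHomeomorphOn
  intro x
  obtain ⟨z, hz⟩ := hgs (f x)
  exact h3 x ⟨⟨(z, x), hz⟩, Set.mem_univ _, rfl⟩
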